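/- For every rational t with t ∉ {-1, 0, 1} such that t^2-6t+1 ≠ 0, t^2+6t+1 ≠ 0 (automatic over ℚ) and all relevant denominators are nonzero, the six rational functions a, b, c, d, e, f defined by: a = 18t(t-1)(t+1)/((t^2-6t+1)(t^2+6t+1)), b = (t-1)(t^2+6t+1)^2/(6t(t+1)(t^2-6t+1)), c = (t+1)(t^2-6t+1)^2/(6t(t-1)(t^2+6t+1)), and d = d1/d2, e = e1/e2, f = f1/f2 with d1, d2, e1, e2, f1, f2 the explicit polynomials given in the paper, form a rational Diophantine sextuple: the product of any two distinct elements increased by 1 is a square of a rational number. -/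

import Mathlib

/-!
Two universal extensions are combined. Let `P = (0, 1)` on the elliptic curve
`y² = (ax + 1)(bx + 1)(cx + 1)`. For any `a, b, c`, the number `d = x(3P)` makes `ad + 1`, `bd + 1`
and `cd + 1` squares. If `{a, b, c, d}` is a Diophantine quadruple, then each of Dujella's two
numbers `e`, `f` extends it to a quintuple; they are the abscissae of `3P ± S`, where `S` is a point
with `x(S) = 1 / (abc)`. The remaining number `ef + 1` is a square as soon as `S` has order three,
which for `ab + 1 = r²`, `ac + 1 = s²`, `bc + 1 = t²` means `rs + rt + st = 0` for suitable signs of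
the roots. The parametric family consists of triples with this property.

When `S` has order three, put `ξ = abcd - 1`, `L = rst - (r + s + t)ξ` and
`Y² = (abc)²(ad + 1)(bd + 1)(cd + 1)`. The equation of the curve becomes `Y² = L² + ξ³`. For the
quotient `φ` by `S` and its dual `ψ`, the point `3P = ψ(φ(P))` lies in the image of `ψ`, so both
`L + Y` and `L - Y` are cubes. This is what gives `e` and `f` their short closed forms.
-/

section Extensions

variable {K : Type*} [Field K]

/-- A set is Diophantine when the product of any two distinct elements, increased by `1`, is a
square. Zero is allowed as an element. -/
def IsDiophantine (A : Set K) : Prop :=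
  A.Pairwise fun x y ↦ IsSquare (x * y + 1)

theorem IsDiophantine.insert {A : Set K} {x : K} (hA : IsDiophantine A)
    (hx : ∀ y ∈ A, IsSquare (x * y + 1)) : IsDiophantine (insert x A) :=
  Set.Pairwise.insert hA fun y hy _ ↦ ⟨hx y hy, mul_comm x y ▸ hx y hy⟩

/-- The discriminant of a triple: for `P = (0, 1)` on `y² = (ax + 1)(bx + 1)(cx + 1)`, the abscissa
of `2P` is `tripleDisc a b c / (4abc)`. -/
def tripleDisc (a b c : K) : K :=
  (a + b + c) ^ 2 - 4 * (a * b + a * c + b * c)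

/-- The numerator of `tripleExt a b c`, up to the factor `8`. -/
def tripleExtNum (a b c : K) : K :=
  8 * (a * b * c) + (a + b + c) * tripleDisc a b c

/-- The abscissa of `3P`, where `P = (0, 1)` on `y² = (ax + 1)(bx + 1)(cx + 1)`. -/
def tripleExt (a b c : K) : K :=
  8 * tripleExtNum a b c / tripleDisc a b c ^ 2

/-- A square root of `a * tripleExt a b c + 1`. -/
def tripleExtRoot (a b c : K) : K :=
  1 + 4 * a * (b + c - a) / tripleDisc a b c

theorem tripleDisc_rotate (a b c : K) : tripleDisc b c a = tripleDisc a b c := by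
  unfold tripleDisc
  ring

theorem tripleExt_rotate (a b c : K) : tripleExt b c a = tripleExt a b c := by
  unfold tripleExt tripleExtNum
  rw [tripleDisc_rotate]
  ring

theorem mul_tripleExt_add_one {a b c : K} (h : tripleDisc a b c ≠ 0) :
    a * tripleExt a b c + 1 = tripleExtRoot a b c ^ 2 := by
  unfold tripleExt tripleExtRoot
  field_simp
  unfold tripleExtNum tripleDisc
  ring

-- The left side is the ordinate of `3P`; the right side is read off the chord through `P` and `2P`.
theorem tripleExtRoot_mul_mul {a b c : K} (h : tripleDisc a b c ≠ 0) :
    tripleExtRoot a b c * tripleExtRoot b c a * tripleExtRoot c a b =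
      1 - 4 * tripleExtNum a b c * (8 * (a * b * c) + tripleExtNum a b c)
        / tripleDisc a b c ^ 3 := by
  unfold tripleExtRoot
  rw [tripleDisc_rotate b c a, tripleDisc_rotate a b c]
  field_simp
  unfold tripleExtNum tripleDisc
  ring

/-- Dujella's extension of a Diophantine quadruple to a quintuple. The parameter `w` stands for a
square root of the product of the six numbers `ab + 1, …, cd + 1`; its two signs give two
extensions. -/
def quadExt (a b c d w : K) : K :=
  ((a + b + c + d) * (a * b * c * d + 1)
      + 2 * (a * b * c + a * b * d + a * c * d + b * c * d) + 2 * w)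
    / (a * b * c * d - 1) ^ 2

theorem quadExt_rotate (a b c d w : K) : quadExt b c d a w = quadExt a b c d w := by
  unfold quadExt
  ring_nf

theorem isSquare_mul_quadExt_add_one {a b c d u v : K} (hξ : a * b * c * d - 1 ≠ 0)
    (hu : (a * b + 1) * (a * c + 1) * (a * d + 1) = u ^ 2)
    (hv : (b * c + 1) * (b * d + 1) * (c * d + 1) = v ^ 2) :
    IsSquare (a * quadExt a b c d (u * v) + 1) := by
  rw [isSquare_iff_exists_sq]
  refine ⟨(u + a * v) / (a * b * c * d - 1), ?_⟩
  unfold quadExt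
  field_simp
  linear_combination hu + a ^ 2 * hv

section Roots

variable {a b c d r s t x y z : K}

theorem isSquare_mul_quadExt_add_one_of_mem (hξ : a * b * c * d - 1 ≠ 0)
    (hab : a * b + 1 = r ^ 2) (hac : a * c + 1 = s ^ 2) (hbc : b * c + 1 = t ^ 2)
    (had : a * d + 1 = x ^ 2) (hbd : b * d + 1 = y ^ 2) (hcd : c * d + 1 = z ^ 2) :
    ∀ u ∈ ({a, b, c, d} : Set K),
      IsSquare (u * quadExt a b c d (r * s * t * (x * y * z)) + 1) := by
  rintro u (rfl | rfl | rfl | rfl)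
  · rw [show r * s * t * (x * y * z) = r * s * x * (t * y * z) by ring]
    refine isSquare_mul_quadExt_add_one hξ ?_ ?_
    · rw [hab, hac, had]; ring
    · rw [hbc, hbd, hcd]; ring
  · rw [show r * s * t * (x * y * z) = t * y * r * (z * s * x) by ring, ← quadExt_rotate]
    refine isSquare_mul_quadExt_add_one (by convert hξ using 1; ring) ?_ ?_
    · rw [hbc, hbd, mul_comm u a, hab]; ring
    · rw [hcd, mul_comm c a, hac, mul_comm d a, had]; ring
  · rw [show r * s * t * (x * y * z) = z * s * t * (x * y * r) by ring, ← quadExt_rotate,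
      ← quadExt_rotate]
    refine isSquare_mul_quadExt_add_one (by convert hξ using 1; ring) ?_ ?_
    · rw [hcd, mul_comm u a, hac, mul_comm u b, hbc]; ring
    · rw [mul_comm d a, had, mul_comm d b, hbd, hab]; ring
  · rw [show r * s * t * (x * y * z) = x * y * z * (r * s * t) by ring, ← quadExt_rotate a,
      ← quadExt_rotate b, ← quadExt_rotate c]
    refine isSquare_mul_quadExt_add_one (by convert hξ using 1; ring) ?_ ?_
    · rw [mul_comm u a, had, mul_comm u b, hbd, mul_comm u c, hcd]; ring
    · rw [hab, hac, hbc]; ring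

theorem quadExt_mul_quadExt_neg {w : K} (hξ : a * b * c * d - 1 ≠ 0)
    (hw : (a * b + 1) * (a * c + 1) * (b * c + 1)
      * ((a * d + 1) * (b * d + 1) * (c * d + 1)) = w ^ 2) :
    quadExt a b c d w * quadExt a b c d (-w) =
      (tripleDisc a b c + d ^ 2 - 2 * d * (a + b + c) - 4 * (a * b * c * d) - 4)
        / (a * b * c * d - 1) ^ 2 := by
  unfold quadExt tripleDisc
  field_simp
  linear_combination 4 * hw

section Flex

variable (hab : a * b + 1 = r ^ 2) (hac : a * c + 1 = s ^ 2) (hbc : b * c + 1 = t ^ 2)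
  (hflex : r * s + r * t + s * t = 0)

include hab hac hbc hflex

theorem sum_mul_add_of_flex : a * b + a * c + b * c = (r + s + t) ^ 2 - 3 := by
  linear_combination hab + hac + hbc - 2 * hflex

theorem prod_mul_sum_of_flex :
    a * b * c * (a + b + c) = 3 - 2 * (r + s + t) * (r + s + t + r * s * t) := by
  calc a * b * c * (a + b + c) = a * b * (a * c) + a * b * (b * c) + a * c * (b * c) := by ring
    _ = (r ^ 2 - 1) * (s ^ 2 - 1) + (r ^ 2 - 1) * (t ^ 2 - 1) + (s ^ 2 - 1) * (t ^ 2 - 1) := by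
      simp only [← hab, ← hac, ← hbc, add_sub_cancel_right]
    _ = 3 - 2 * (r + s + t) * (r + s + t + r * s * t) := by
      linear_combination (r * s + r * t + s * t + 4) * hflex

theorem prod_sq_of_flex : (a * b * c) ^ 2 = (r + s + t + r * s * t) ^ 2 - 1 := by
  calc (a * b * c) ^ 2 = a * b * (a * c) * (b * c) := by ring
    _ = (r ^ 2 - 1) * (s ^ 2 - 1) * (t ^ 2 - 1) := by
      simp only [← hab, ← hac, ← hbc, add_sub_cancel_right]
    _ = (r + s + t + r * s * t) ^ 2 - 1 := by
      linear_combination -(r * s + r * t + s * t + 2) * hflex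

theorem isSquare_quadExt_mul_quadExt_neg_add_one (habc : a * b * c ≠ 0)
    (hξ : a * b * c * d - 1 ≠ 0) (had : a * d + 1 = x ^ 2) (hbd : b * d + 1 = y ^ 2)
    (hcd : c * d + 1 = z ^ 2) :
    IsSquare (quadExt a b c d (r * s * t * (x * y * z))
      * quadExt a b c d (-(r * s * t * (x * y * z))) + 1) := by
  have hsum := prod_mul_sum_of_flex hab hac hbc hflex
  have hprod := prod_sq_of_flex hab hac hbc hflex
  have hpairs := sum_mul_add_of_flex hab hac hbc hflex
  rw [isSquare_iff_exists_sq,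
    quadExt_mul_quadExt_neg hξ (by rw [hab, hac, hbc, had, hbd, hcd]; ring), tripleDisc, hpairs]
  generalize a * b * c = g at habc hξ hsum hprod ⊢
  generalize r + s + t + r * s * t = σ at hsum hprod
  rw [mul_comm g d] at hξ ⊢
  refine ⟨(g * σ * d - (3 * σ - 2 * (r + s + t))) / (g * (d * g - 1)), ?_⟩
  field_simp
  linear_combination (g * (a + b + c) + (3 - 2 * (r + s + t) * σ) - 2 * d * g) * hsum
    + (9 - 4 * (r + s + t) ^ 2 + d ^ 2 * g ^ 2 - 6 * d * g) * hprod

-- In the notation of the introduction, the last two hypotheses are `ξ = αβ` and `L + Y = α³`.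
theorem quadExt_eq_of_cube {v α β : K} (habc : a * b * c ≠ 0) (hβ : β ≠ 0) (hα : α ≠ 0)
    (hξ : a * b * c * d - 1 = α * β)
    (hcube : r * s * t - (r + s + t) * (α * β) + a * b * c * v = α ^ 3) :
    quadExt a b c d (r * s * t * v) = (1 + 2 * (r * s * t) * α / β ^ 2) / (a * b * c) := by
  have hsum := prod_mul_sum_of_flex hab hac hbc hflex
  have hprod := prod_sq_of_flex hab hac hbc hflex
  have hpairs := sum_mul_add_of_flex hab hac hbc hflex
  unfold quadExt
  rw [hξ]
  generalize a * b * c = g at habc hξ hsum hprod hcube ⊢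
  field_simp
  linear_combination (g * d + 1) * hsum + 2 * hprod + 2 * (g * d) * hpairs
    + (g * d - 1 + α * β - 2 * (r * s * t) * (r + s + t)) * hξ + 2 * (r * s * t) * hcube

theorem isDiophantine_sextuple (habc : a * b * c ≠ 0) (hξ : a * b * c * d - 1 ≠ 0)
    (had : a * d + 1 = x ^ 2) (hbd : b * d + 1 = y ^ 2) (hcd : c * d + 1 = z ^ 2) :
    IsDiophantine ({a, b, c, d, quadExt a b c d (r * s * t * (x * y * z)),
      quadExt a b c d (-(r * s * t * (x * y * z)))} : Set K) := by
  have he := isSquare_mul_quadExt_add_one_of_mem hξ hab hac hbc had hbd hcd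
  have hf := isSquare_mul_quadExt_add_one_of_mem (z := -z) hξ hab hac hbc had hbd (by rwa [neg_sq])
  have hef := isSquare_quadExt_mul_quadExt_neg_add_one hab hac hbc hflex habc hξ had hbd hcd
  simp only [mul_neg] at hf
  simp only [Set.forall_mem_insert, Set.mem_singleton_iff, forall_eq] at he hf
  obtain ⟨hae, hbe, hce, hde⟩ := he
  obtain ⟨haf, hbf, hcf, hdf⟩ := hf
  refine .insert (.insert (.insert (.insert (.insert (Set.pairwise_singleton _ _) ?_) ?_) ?_) ?_) ?_
    <;> simp [*, IsSquare.sq]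

end Flex
end Roots
end Extensions

section Family

variable {K : Type*} [Field K]

/-- The quadratic `t² - 6t + 1`, a factor of the denominators of the family. -/
def quadMinus (t : K) : K :=
  t ^ 2 - 6 * t + 1

/-- The quadratic `t² + 6t + 1`, a factor of the denominators of the family. -/
def quadPlus (t : K) : K :=
  t ^ 2 + 6 * t + 1

/-- The member `a` of the parametric family. -/
def familyA (t : K) : K :=
  18 * t * (t - 1) * (t + 1) / (quadMinus t * quadPlus t)

/-- The member `b` of the parametric family. -/
def familyB (t : K) : K :=
  (t - 1) * quadPlus t ^ 2 / (6 * t * (t + 1) * quadMinus t)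

/-- The member `c` of the parametric family. -/
def familyC (t : K) : K :=
  (t + 1) * quadMinus t ^ 2 / (6 * t * (t - 1) * quadPlus t)

/-- A common denominator of `familyA t`, `familyB t` and `familyC t`. -/
def denABC (t : K) : K :=
  6 * t * (t - 1) * (t + 1) * quadMinus t * quadPlus t

/-- The nontrivial factor of the denominator `t * denD t ^ 2` of `familyD t`; it is also the
discriminant of the triple `familyA t`, `familyB t`, `familyC t` up to a square. -/
def denD (t : K) : K :=
  37 * t ^ 12 - 885 * t ^ 10 + 9735 * t ^ 8 - 13678 * t ^ 6 + 9735 * t ^ 4 - 885 * t ^ 2 + 37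

/-- The nontrivial factor of the numerator of `familyD t`. -/
def numD (t : K) : K :=
  (8 * t ^ 6 + 27 * t ^ 5 + 24 * t ^ 4 - 54 * t ^ 3 + 24 * t ^ 2 + 27 * t + 8)
    * (8 * t ^ 6 - 27 * t ^ 5 + 24 * t ^ 4 + 54 * t ^ 3 + 24 * t ^ 2 - 27 * t + 8)
    * (t ^ 8 + 22 * t ^ 6 - 174 * t ^ 4 + 22 * t ^ 2 + 1)

/-- The factor of the denominator of `familyE t` that occurs squared. -/
def denE (t : K) : K :=
  16 * t ^ 14 + 141 * t ^ 12 - 1500 * t ^ 10 + 7586 * t ^ 8 - 2724 * t ^ 6 + 165 * t ^ 4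
    + 424 * t ^ 2 - 12

/-- The factor of the denominator of `familyF t` that occurs squared. -/
def denF (t : K) : K :=
  12 * t ^ 14 - 424 * t ^ 12 - 165 * t ^ 10 + 2724 * t ^ 8 - 7586 * t ^ 6 + 1500 * t ^ 4
    - 141 * t ^ 2 - 16

/-- The member `d` of the parametric family. -/
def familyD (t : K) : K :=
  (6 * (t + 1) * (t - 1) * quadPlus t * quadMinus t
      * (8 * t ^ 6 + 27 * t ^ 5 + 24 * t ^ 4 - 54 * t ^ 3 + 24 * t ^ 2 + 27 * t + 8)
      * (8 * t ^ 6 - 27 * t ^ 5 + 24 * t ^ 4 + 54 * t ^ 3 + 24 * t ^ 2 - 27 * t + 8)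
      * (t ^ 8 + 22 * t ^ 6 - 174 * t ^ 4 + 22 * t ^ 2 + 1))
    / (t * denD t ^ 2)

/-- The member `e` of the parametric family. -/
def familyE (t : K) : K :=
  (-2 * t * (4 * t ^ 6 - 111 * t ^ 4 + 18 * t ^ 2 + 25)
      * (3 * t ^ 7 + 14 * t ^ 6 - 42 * t ^ 5 + 30 * t ^ 4 + 51 * t ^ 3 + 18 * t ^ 2 - 12 * t + 2)
      * (3 * t ^ 7 - 14 * t ^ 6 - 42 * t ^ 5 - 30 * t ^ 4 + 51 * t ^ 3 - 18 * t ^ 2 - 12 * t - 2)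
      * (t ^ 2 + 3 * t - 2) * (t ^ 2 - 3 * t - 2)
      * (2 * t ^ 2 + 3 * t - 1) * (2 * t ^ 2 - 3 * t - 1)
      * (t ^ 2 + 7) * (7 * t ^ 2 + 1))
    / (3 * (t + 1) * quadMinus t * (t - 1) * quadPlus t * denE t ^ 2)

/-- The member `f` of the parametric family. -/
def familyF (t : K) : K :=
  (2 * t * (25 * t ^ 6 + 18 * t ^ 4 - 111 * t ^ 2 + 4)
      * (2 * t ^ 7 - 12 * t ^ 6 + 18 * t ^ 5 + 51 * t ^ 4 + 30 * t ^ 3 - 42 * t ^ 2 + 14 * t + 3)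
      * (2 * t ^ 7 + 12 * t ^ 6 + 18 * t ^ 5 - 51 * t ^ 4 + 30 * t ^ 3 + 42 * t ^ 2 + 14 * t - 3)
      * (2 * t ^ 2 + 3 * t - 1) * (2 * t ^ 2 - 3 * t - 1)
      * (t ^ 2 - 3 * t - 2) * (t ^ 2 + 3 * t - 2)
      * (t ^ 2 + 7) * (7 * t ^ 2 + 1))
    / (3 * (t + 1) * quadMinus t * (t - 1) * quadPlus t * denF t ^ 2)

/-- A square root of `familyA t * familyB t + 1`. The signs of `rootAB`, `rootAC` and `rootBC` are
chosen so that the sum of their pairwise products vanishes. -/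
def rootAB (t : K) : K :=
  -2 * (t ^ 2 + 1) / quadMinus t

/-- A square root of `familyA t * familyC t + 1`, with the sign described at `rootAB`. -/
def rootAC (t : K) : K :=
  2 * (t ^ 2 + 1) / quadPlus t

/-- A square root of `familyB t * familyC t + 1`, with the sign described at `rootAB`. -/
def rootBC (t : K) : K :=
  -(t ^ 2 + 1) / (6 * t)

/-- A square root of the product of `familyA t * familyD t + 1`, `familyB t * familyD t + 1` and
`familyC t * familyD t + 1`: the ordinate of the point of abscissa `familyD t`. -/
def ordinateD (t : K) : K :=
  tripleExtRoot (familyA t) (familyB t) (familyC t)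
    * tripleExtRoot (familyB t) (familyC t) (familyA t)
    * tripleExtRoot (familyC t) (familyA t) (familyB t)

variable {t : K}

theorem denABC_ne_zero (h6 : (6 : K) ≠ 0) (ht : t ≠ -1 ∧ t ≠ 0 ∧ t ≠ 1)
    (hm : quadMinus t ≠ 0) (hp : quadPlus t ≠ 0) : denABC t ≠ 0 := by
  obtain ⟨htn, ht0, ht1⟩ := ht
  have hv : t + 1 ≠ 0 := fun h ↦ htn (eq_neg_of_add_eq_zero_left h)
  simp [denABC, sub_ne_zero, *]

theorem factors_ne_zero_of_denABC_ne_zero (h : denABC t ≠ 0) :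
    (2 : K) ≠ 0 ∧ (3 : K) ≠ 0 ∧ (6 : K) ≠ 0 ∧ t ≠ 0 ∧ t - 1 ≠ 0 ∧ t + 1 ≠ 0 ∧
      quadMinus t ≠ 0 ∧ quadPlus t ≠ 0 := by
  simp only [denABC, mul_ne_zero_iff, and_assoc] at h
  have h23 : (2 : K) * 3 ≠ 0 := by
    convert h.1 using 1
    norm_num
  exact ⟨left_ne_zero_of_mul h23, right_ne_zero_of_mul h23, h⟩

theorem familyA_mul_familyB_add_one (h : denABC t ≠ 0) :
    familyA t * familyB t + 1 = rootAB t ^ 2 := by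
  obtain ⟨-, -, h6, ht0, -, hv, hm, -⟩ := factors_ne_zero_of_denABC_ne_zero h
  unfold familyA familyB rootAB
  field_simp
  unfold quadMinus quadPlus
  ring

theorem familyA_mul_familyC_add_one (h : denABC t ≠ 0) :
    familyA t * familyC t + 1 = rootAC t ^ 2 := by
  obtain ⟨-, -, h6, ht0, hu, -, -, hp⟩ := factors_ne_zero_of_denABC_ne_zero h
  unfold familyA familyC rootAC
  field_simp
  unfold quadMinus quadPlus
  ring

theorem familyB_mul_familyC_add_one (h : denABC t ≠ 0) :
    familyB t * familyC t + 1 = rootBC t ^ 2 := by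
  obtain ⟨-, -, h6, ht0, hu, hv, -⟩ := factors_ne_zero_of_denABC_ne_zero h
  unfold familyB familyC rootBC
  field_simp
  unfold quadMinus quadPlus
  ring

theorem roots_flex (h : denABC t ≠ 0) :
    rootAB t * rootAC t + rootAB t * rootBC t + rootAC t * rootBC t = 0 := by
  obtain ⟨-, -, h6, ht0, -, -, hm, hp⟩ := factors_ne_zero_of_denABC_ne_zero h
  unfold rootAB rootAC rootBC
  field_simp
  unfold quadMinus quadPlus
  ring

theorem roots_prod (h : denABC t ≠ 0) :
    rootAB t * rootAC t * rootBC t = 2 * (t ^ 2 + 1) ^ 3 / (3 * t * quadMinus t * quadPlus t) := by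
  obtain ⟨h2, h3, h6, ht0, -, -, hm, hp⟩ := factors_ne_zero_of_denABC_ne_zero h
  unfold rootAB rootAC rootBC
  field_simp
  ring

theorem familyABC_prod (h : denABC t ≠ 0) :
    familyA t * familyB t * familyC t = (t - 1) * (t + 1) / (2 * t) := by
  obtain ⟨h2, -, h6, ht0, hu, hv, hm, hp⟩ := factors_ne_zero_of_denABC_ne_zero h
  unfold familyA familyB familyC
  field_simp
  ring

theorem familyABC_sum (h : denABC t ≠ 0) :
    familyA t + familyB t + familyC t =
      (t ^ 8 + 130 * t ^ 6 - 390 * t ^ 4 + 130 * t ^ 2 + 1)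
        / (3 * t * (t - 1) * (t + 1) * quadMinus t * quadPlus t) := by
  obtain ⟨-, h3, h6, ht0, hu, hv, hm, hp⟩ := factors_ne_zero_of_denABC_ne_zero h
  unfold familyA familyB familyC
  field_simp
  unfold quadMinus quadPlus
  ring

theorem familyABC_disc (h : denABC t ≠ 0) :
    tripleDisc (familyA t) (familyB t) (familyC t) =
      denD t * (2 / (3 * (t - 1) * (t + 1) * quadMinus t * quadPlus t)) ^ 2 := by
  obtain ⟨-, h3, h6, ht0, hu, hv, hm, hp⟩ := factors_ne_zero_of_denABC_ne_zero h
  unfold tripleDisc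
  rw [familyABC_sum h, eq_sub_of_add_eq (familyA_mul_familyB_add_one h),
    eq_sub_of_add_eq (familyA_mul_familyC_add_one h),
    eq_sub_of_add_eq (familyB_mul_familyC_add_one h), rootAB, rootAC, rootBC]
  field_simp
  unfold denD quadMinus quadPlus
  ring

theorem familyABC_disc_ne_zero (h : denABC t ≠ 0) (hD : denD t ≠ 0) :
    tripleDisc (familyA t) (familyB t) (familyC t) ≠ 0 := by
  obtain ⟨h2, h3, -, -, hu, hv, hm, hp⟩ := factors_ne_zero_of_denABC_ne_zero h
  rw [familyABC_disc h]
  simp [*]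

theorem tripleExtNum_familyABC (h : denABC t ≠ 0) :
    tripleExtNum (familyA t) (familyB t) (familyC t) =
      4 * numD t / (t * (3 * (t - 1) * (t + 1) * quadMinus t * quadPlus t) ^ 3) := by
  obtain ⟨h2, h3, -, ht0, hu, hv, hm, hp⟩ := factors_ne_zero_of_denABC_ne_zero h
  rw [tripleExtNum, familyABC_prod h, familyABC_sum h, familyABC_disc h]
  field_simp
  unfold numD denD quadMinus quadPlus
  ring

theorem tripleExt_familyABC (h : denABC t ≠ 0) (hD : denD t ≠ 0) :
    tripleExt (familyA t) (familyB t) (familyC t) = familyD t := by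
  obtain ⟨h2, -, -, ht0, hu, hv, hm, hp⟩ := factors_ne_zero_of_denABC_ne_zero h
  unfold tripleExt familyD
  rw [tripleExtNum_familyABC h, familyABC_disc h]
  field_simp
  unfold numD
  ring

theorem familyABCD_prod_sub_one (h : denABC t ≠ 0) (hD : denD t ≠ 0) :
    familyA t * familyB t * familyC t * familyD t - 1 = denE t * denF t / (t * denD t) ^ 2 := by
  obtain ⟨h2, -, -, ht0, -⟩ := factors_ne_zero_of_denABC_ne_zero h
  rw [familyABC_prod h, familyD]
  field_simp
  unfold denD denE denF quadMinus quadPlus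
  ring

theorem ordinateD_eq (h : denABC t ≠ 0) (hD : denD t ≠ 0) :
    ordinateD t = 1 - numD t
      * (numD t + (t - 1) * (t + 1) * (3 * (t - 1) * (t + 1) * quadMinus t * quadPlus t) ^ 3)
      / (t ^ 2 * denD t ^ 3) := by
  obtain ⟨h2, h3, -, ht0, hu, hv, hm, hp⟩ := factors_ne_zero_of_denABC_ne_zero h
  unfold ordinateD
  rw [tripleExtRoot_mul_mul (familyABC_disc_ne_zero h hD), tripleExtNum_familyABC h,
    familyABC_prod h, familyABC_disc h]
  field_simp
  ring

-- In the notation of the introduction, this lemma and the next one say that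
-- `L + Y = (-denF t / (t * denD t)) ^ 3` and `L - Y = (denE t / (t * denD t)) ^ 3`.
theorem familyABC_prod_mul_ordinateD (h : denABC t ≠ 0) (hD : denD t ≠ 0) :
    familyA t * familyB t * familyC t * ordinateD t =
      -(denE t ^ 3 + denF t ^ 3) / (2 * (t * denD t) ^ 3) := by
  obtain ⟨h2, -, -, ht0, -⟩ := factors_ne_zero_of_denABC_ne_zero h
  rw [familyABC_prod h, ordinateD_eq h hD]
  field_simp
  unfold numD denD denE denF quadMinus quadPlus
  ring

theorem roots_prod_sub_sum_mul (h : denABC t ≠ 0) (hD : denD t ≠ 0) :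
    rootAB t * rootAC t * rootBC t
        - (rootAB t + rootAC t + rootBC t) * (denE t * denF t / (t * denD t) ^ 2) =
      (denE t ^ 3 - denF t ^ 3) / (2 * (t * denD t) ^ 3) := by
  obtain ⟨h2, h3, h6, ht0, -, -, hm, hp⟩ := factors_ne_zero_of_denABC_ne_zero h
  rw [roots_prod h, rootAB, rootAC, rootBC]
  field_simp
  unfold denD denE denF quadMinus quadPlus
  ring

theorem quadExt_familyABCD {v p q : K} (h : denABC t ≠ 0) (hD : denD t ≠ 0) (hp0 : p ≠ 0)
    (hq0 : q ≠ 0) (hpq : p * q = denE t * denF t)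
    (hord : familyA t * familyB t * familyC t * v =
      (2 * p ^ 3 - (denE t ^ 3 - denF t ^ 3)) / (2 * (t * denD t) ^ 3)) :
    quadExt (familyA t) (familyB t) (familyC t) (familyD t)
        (rootAB t * rootAC t * rootBC t * v) =
      2 * t * (3 * quadMinus t * quadPlus t * q ^ 2 + 4 * (t ^ 2 + 1) ^ 3 * denD t * p)
        / (3 * (t - 1) * (t + 1) * quadMinus t * quadPlus t * q ^ 2) := by
  have habc := familyABC_prod h
  obtain ⟨h2, h3, -, ht0, hu, hv, hm, hp⟩ := factors_ne_zero_of_denABC_ne_zero h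
  have hαβ : denE t * denF t / (t * denD t) ^ 2 = p / (t * denD t) * (q / (t * denD t)) := by
    rw [← hpq]
    field_simp
  have hcube : rootAB t * rootAC t * rootBC t - (rootAB t + rootAC t + rootBC t)
        * (p / (t * denD t) * (q / (t * denD t)))
      + familyA t * familyB t * familyC t * v = (p / (t * denD t)) ^ 3 := by
    rw [← hαβ, roots_prod_sub_sum_mul h hD, hord]
    field_simp
    ring
  rw [quadExt_eq_of_cube (familyA_mul_familyB_add_one h) (familyA_mul_familyC_add_one h)
    (familyB_mul_familyC_add_one h) (roots_flex h) (habc ▸ by simp [*]) (by simp [*])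
    (by simp [*]) ((familyABCD_prod_sub_one h hD).trans hαβ) hcube, habc, roots_prod h]
  field_simp
  ring

theorem quadExt_familyE (h : denABC t ≠ 0) (hD : denD t ≠ 0) (hE : denE t ≠ 0) (hF : denF t ≠ 0) :
    quadExt (familyA t) (familyB t) (familyC t) (familyD t)
      (rootAB t * rootAC t * rootBC t * ordinateD t) = familyE t := by
  rw [quadExt_familyABCD (p := -denF t) (q := -denE t) h hD (neg_ne_zero.2 hF) (neg_ne_zero.2 hE)
    (by ring) (by rw [familyABC_prod_mul_ordinateD h hD]; ring), familyE]
  obtain ⟨h2, h3, -, ht0, hu, hv, hm, hp⟩ := factors_ne_zero_of_denABC_ne_zero h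
  field_simp
  unfold denD denE denF quadMinus quadPlus
  ring

theorem quadExt_familyF (h : denABC t ≠ 0) (hD : denD t ≠ 0) (hE : denE t ≠ 0) (hF : denF t ≠ 0) :
    quadExt (familyA t) (familyB t) (familyC t) (familyD t)
      (rootAB t * rootAC t * rootBC t * -ordinateD t) = familyF t := by
  rw [quadExt_familyABCD (p := denE t) (q := denF t) h hD hE hF rfl
    (by rw [mul_neg, familyABC_prod_mul_ordinateD h hD]; ring), familyF]
  obtain ⟨h2, h3, -, ht0, hu, hv, hm, hp⟩ := factors_ne_zero_of_denABC_ne_zero h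
  field_simp
  unfold denD denE denF quadMinus quadPlus
  ring

theorem parametric_sextuple_general (h6 : (6 : K) ≠ 0) (ht : t ≠ -1 ∧ t ≠ 0 ∧ t ≠ 1)
    (hm : quadMinus t ≠ 0) (hp : quadPlus t ≠ 0) (hD : denD t ≠ 0) (hE : denE t ≠ 0)
    (hF : denF t ≠ 0) :
    IsDiophantine {familyA t, familyB t, familyC t, familyD t, familyE t, familyF t} := by
  have h := denABC_ne_zero h6 ht hm hp
  obtain ⟨h2, -, -, -, hu, hv, -⟩ := factors_ne_zero_of_denABC_ne_zero h
  have habc : familyA t * familyB t * familyC t ≠ 0 := by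
    simp [familyABC_prod h, *]
  have hξ : familyA t * familyB t * familyC t * familyD t - 1 ≠ 0 := by
    simp [familyABCD_prod_sub_one h hD, *]
  have hdisc := familyABC_disc_ne_zero h hD
  have had := mul_tripleExt_add_one hdisc
  have hbd := mul_tripleExt_add_one ((tripleDisc_rotate _ _ _).trans_ne hdisc)
  have hcd := mul_tripleExt_add_one ((tripleDisc_rotate _ _ _).symm.trans_ne hdisc)
  rw [tripleExt_rotate] at hbd
  rw [← tripleExt_rotate] at hcd
  rw [tripleExt_familyABC h hD] at had hbd hcd
  have key := isDiophantine_sextuple (familyA_mul_familyB_add_one h) (familyA_mul_familyC_add_one h)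
    (familyB_mul_familyC_add_one h) (roots_flex h) habc hξ had hbd hcd
  rwa [← ordinateD, quadExt_familyE h hD hE hF, ← mul_neg, quadExt_familyF h hD hE hF] at key

end Family

theorem parametric_sextuple (t : ℚ) (ht : t ≠ -1 ∧ t ≠ 0 ∧ t ≠ 1)
    (h1 : t^2 - 6*t + 1 ≠ 0) (h2 : t^2 + 6*t + 1 ≠ 0)
    (a b c d e f : ℚ)
    (hA : a = 18*t*(t-1)*(t+1) / ((t^2-6*t+1)*(t^2+6*t+1)))
    (hB : b = (t-1)*(t^2+6*t+1)^2 / (6*t*(t+1)*(t^2-6*t+1)))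
    (hC : c = (t+1)*(t^2-6*t+1)^2 / (6*t*(t-1)*(t^2+6*t+1)))
    (hD : d = (6*(t+1)*(t-1)*(t^2+6*t+1)*(t^2-6*t+1)
        * (8*t^6+27*t^5+24*t^4-54*t^3+24*t^2+27*t+8)
        * (8*t^6-27*t^5+24*t^4+54*t^3+24*t^2-27*t+8)
        * (t^8+22*t^6-174*t^4+22*t^2+1))
      / (t*(37*t^12-885*t^10+9735*t^8-13678*t^6+9735*t^4-885*t^2+37)^2))
    (hd2 : t*(37*t^12-885*t^10+9735*t^8-13678*t^6+9735*t^4-885*t^2+37)^2 ≠ 0)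
    (hE : e = (-2*t*(4*t^6-111*t^4+18*t^2+25)
        * (3*t^7+14*t^6-42*t^5+30*t^4+51*t^3+18*t^2-12*t+2)
        * (3*t^7-14*t^6-42*t^5-30*t^4+51*t^3-18*t^2-12*t-2)
        * (t^2+3*t-2)*(t^2-3*t-2)*(2*t^2+3*t-1)*(2*t^2-3*t-1)*(t^2+7)*(7*t^2+1))
      / (3*(t+1)*(t^2-6*t+1)*(t-1)*(t^2+6*t+1)
        * (16*t^14+141*t^12-1500*t^10+7586*t^8-2724*t^6+165*t^4+424*t^2-12)^2))
    (he2 : 3*(t+1)*(t^2-6*t+1)*(t-1)*(t^2+6*t+1)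
        * (16*t^14+141*t^12-1500*t^10+7586*t^8-2724*t^6+165*t^4+424*t^2-12)^2 ≠ 0)
    (hF : f = (2*t*(25*t^6+18*t^4-111*t^2+4)
        * (2*t^7-12*t^6+18*t^5+51*t^4+30*t^3-42*t^2+14*t+3)
        * (2*t^7+12*t^6+18*t^5-51*t^4+30*t^3+42*t^2+14*t-3)
        * (2*t^2+3*t-1)*(2*t^2-3*t-1)*(t^2-3*t-2)*(t^2+3*t-2)*(t^2+7)*(7*t^2+1))
      / (3*(t+1)*(t^2-6*t+1)*(t-1)*(t^2+6*t+1)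
        * (12*t^14-424*t^12-165*t^10+2724*t^8-7586*t^6+1500*t^4-141*t^2-16)^2))
    (hf2 : 3*(t+1)*(t^2-6*t+1)*(t-1)*(t^2+6*t+1)
        * (12*t^14-424*t^12-165*t^10+2724*t^8-7586*t^6+1500*t^4-141*t^2-16)^2 ≠ 0) :
    ∀ x ∈ ({a, b, c, d, e, f} : Set ℚ), ∀ y ∈ ({a, b, c, d, e, f} : Set ℚ),
      x ≠ y → ∃ q : ℚ, x * y + 1 = q ^ 2 := by
  subst hA hB hC hD hE hF
  exact fun x hx y hy hxy ↦ (isSquare_iff_exists_sq _).1 <|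
    parametric_sextuple_general (by norm_num) ht h1 h2 (ne_zero_pow two_ne_zero <|
      right_ne_zero_of_mul hd2) (ne_zero_pow two_ne_zero <| right_ne_zero_of_mul he2)
      (ne_zero_pow two_ne_zero <| right_ne_zero_of_mul hf2) hx hy hxy
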